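/- arXiv:1006.4696 — 2 statements merged into one kernel-verified Lean document; each statement's English description precedes it below -/
import Mathlib

section
/- (Payoff monotonicity under good removal) For any unit-demand market M, any buyer i, and any good j: the payoff of buyer i at the highest competitive equilibrium of M is at most her payoff at the lowest competitive equilibrium of M^{-j} (the market without good j); moreover, if i is matched to j in the highest competitive equilibrium of M, then these two payoffs are equal. -/
attribute [local instance] Classical.propDecidable

/-- A unit-demand market: finite sets of buyers `I` and goods `J`, with utility
functions `u i j : ℝ → ℝ` that are continuous, strictly decreasing, surjective
(domain and range cover all of `ℝ`), and eventually non-positive. -/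
structure Market (I J : Type) [Fintype I] [Fintype J] where
  u : I → J → ℝ → ℝ
  cont : ∀ i j, Continuous (u i j)
  anti : ∀ i j, StrictAnti (u i j)
  surj : ∀ i j, Function.Surjective (u i j)
  evNonpos : ∀ i j, ∃ x : ℝ, ∀ y ≥ x, u i j y ≤ 0

/-- A competitive equilibrium: nonnegative prices `p`, nonnegative payoffs `w`,
and a partial matching `μ` (injective on matched buyers) such that every buyer
receives a most preferred good at the prices, unmatched buyers have payoff `0`,
and unmatched goods have price `0`. -/
def IsEquilib {I J : Type} [Fintype I] [Fintype J] (M : Market I J)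
    (p : J → ℝ) (w : I → ℝ) (μ : I → Option J) : Prop :=
  (∀ i i' j, μ i = some j → μ i' = some j → i = i') ∧
  (∀ j, 0 ≤ p j) ∧ (∀ i, 0 ≤ w i) ∧
  (∀ i j, μ i = some j → w i = M.u i j (p j)) ∧
  (∀ i j, M.u i j (p j) ≤ w i) ∧
  (∀ i, μ i = none → w i = 0) ∧
  (∀ j, (∀ i, μ i ≠ some j) → p j = 0)

/-- `W` is the lowest competitive equilibrium: its prices are componentwise
below those of every competitive equilibrium. -/
def IsLowest {I J : Type} [Fintype I] [Fintype J] (M : Market I J)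
    (p : J → ℝ) (w : I → ℝ) (μ : I → Option J) : Prop :=
  IsEquilib M p w μ ∧ ∀ p' w' μ', IsEquilib M p' w' μ' → ∀ j, p j ≤ p' j

/-- `W` is the highest competitive equilibrium: its prices are componentwise
above those of every competitive equilibrium. -/
def IsHighest {I J : Type} [Fintype I] [Fintype J] (M : Market I J)
    (p : J → ℝ) (w : I → ℝ) (μ : I → Option J) : Prop :=
  IsEquilib M p w μ ∧ ∀ p' w' μ', IsEquilib M p' w' μ' → ∀ j, p' j ≤ p j

/-- Induced payoff `u_i(p) = max({u_i^j(p^j) : j} ∪ {0})`. -/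
noncomputable def inducedPayoff {I J : Type} [Fintype I] [Fintype J] (M : Market I J)
    (p : J → ℝ) (i : I) : ℝ :=
  (insert (0:ℝ) (Finset.univ.image fun j => M.u i j (p j))).max' (Finset.insert_nonempty _ _)

/-- Induced price `p^j(u) = max({p_i^j(u_i) : i} ∪ {0})`, where `p_i^j` is the
inverse of `u_i^j`. -/
noncomputable def inducedPrice {I J : Type} [Fintype I] [Fintype J] (M : Market I J)
    (w : I → ℝ) (j : J) : ℝ :=
  (insert (0:ℝ) (Finset.univ.image fun i => Function.invFun (M.u i j) (w i))).max' (Finset.insert_nonempty _ _)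

/-- The market with buyer `i0` removed. -/
def Market.removeBuyer {I J : Type} [Fintype I] [Fintype J] [DecidableEq I]
    (M : Market I J) (i0 : I) : Market {i : I // i ≠ i0} J where
  u := fun i j => M.u i.1 j
  cont := fun i j => M.cont i.1 j
  anti := fun i j => M.anti i.1 j
  surj := fun i j => M.surj i.1 j
  evNonpos := fun i j => M.evNonpos i.1 j

/-- The market with good `j0` removed. -/
def Market.removeGood {I J : Type} [Fintype I] [Fintype J] [DecidableEq J]
    (M : Market I J) (j0 : J) : Market I {j : J // j ≠ j0} where
  u := fun i j => M.u i j.1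
  cont := fun i j => M.cont i j.1
  anti := fun i j => M.anti i j.1
  surj := fun i j => M.surj i j.1
  evNonpos := fun i j => M.evNonpos i j.1

namespace IsEquilib

variable {I J : Type} [Fintype I] [Fintype J] {M : Market I J}
  {p p' : J → ℝ} {w w' : I → ℝ} {μ μ' : I → Option J}

theorem inj (h : IsEquilib M p w μ) {i i' : I} {j : J} (hi : μ i = some j)
    (hi' : μ i' = some j) : i = i' := h.1 i i' j hi hi'

theorem price_nonneg (h : IsEquilib M p w μ) (j : J) : 0 ≤ p j := h.2.1 j

theorem payoff_nonneg (h : IsEquilib M p w μ) (i : I) : 0 ≤ w i := h.2.2.1 i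

theorem payoff_eq (h : IsEquilib M p w μ) {i : I} {j : J} (hi : μ i = some j) :
    w i = M.u i j (p j) := h.2.2.2.1 i j hi

theorem le_payoff (h : IsEquilib M p w μ) (i : I) (j : J) : M.u i j (p j) ≤ w i :=
  h.2.2.2.2.1 i j

theorem payoff_eq_zero (h : IsEquilib M p w μ) {i : I} (hi : μ i = none) : w i = 0 :=
  h.2.2.2.2.2.1 i hi

theorem price_eq_zero (h : IsEquilib M p w μ) {j : J} (hj : ∀ i, μ i ≠ some j) : p j = 0 :=
  h.2.2.2.2.2.2 j hj

theorem exists_match_of_payoff_pos (h : IsEquilib M p w μ) {i : I} (hi : 0 < w i) :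
    ∃ j, μ i = some j :=
  Option.ne_none_iff_exists'.mp fun hn => hi.ne' (h.payoff_eq_zero hn)

theorem exists_match_of_price_pos (h : IsEquilib M p w μ) {j : J} (hj : 0 < p j) :
    ∃ i, μ i = some j := by
  by_contra! hn
  exact hj.ne' (h.price_eq_zero hn)

theorem payoff_le_of_price_le (h : IsEquilib M p w μ) (h' : IsEquilib M p' w' μ')
    (hp : ∀ j, p j ≤ p' j) (i : I) : w' i ≤ w i := by
  cases hi : μ' i with
  | none => exact (h'.payoff_eq_zero hi).trans_le (h.payoff_nonneg i)
  | some j =>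
    rw [h'.payoff_eq hi]
    exact ((M.anti i j).antitone (hp j)).trans (h.le_payoff i j)

end IsEquilib

/-- An intermediate state of the ascending auction with increment `ε`: good `j` has price `ε * k j`
and holder `h j`, and each holder would weakly prefer to get her good for one increment less
over everything else at the current prices. -/
structure IsAuctionState {I J : Type} [Fintype I] [Fintype J] (M : Market I J) (ε : ℝ)
    (k : J → ℕ) (h : J → Option I) : Prop where
  inj : ∀ i j j', h j = some i → h j' = some i → j = j'
  unheld : ∀ j, h j = none → k j = 0
  nonneg : ∀ i j, h j = some i → 0 ≤ M.u i j (ε * k j - ε)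
  envyFree : ∀ i j, h j = some i → ∀ j', M.u i j' (ε * k j') ≤ M.u i j (ε * k j - ε)

theorem Market.exists_price_bound {I J : Type} [Fintype I] [Fintype J] (M : Market I J) :
    ∃ X : ℝ, 0 ≤ X ∧ ∀ i j y, 0 ≤ M.u i j y → y ≤ X := by
  choose x hx using M.evNonpos
  obtain ⟨X, hX⟩ := (Set.finite_range fun a : I × J => x a.1 a.2).bddAbove
  refine ⟨max X 0, le_max_right _ _, fun i j y hy => ?_⟩
  have hxy : y ≤ x i j := by
    by_contra! hlt
    exact absurd (M.anti i j hlt) (not_lt.mpr ((hx i j _ le_rfl).trans hy))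
  exact (hxy.trans (hX ⟨(i, j), rfl⟩)).trans (le_max_left _ _)

theorem IsAuctionState.price_le {I J : Type} [Fintype I] [Fintype J] {M : Market I J} {ε X : ℝ}
    {k : J → ℕ} {h : J → Option I} (hs : IsAuctionState M ε k h) (hε : 0 < ε) (hX0 : 0 ≤ X)
    (hX : ∀ i j y, 0 ≤ M.u i j y → y ≤ X) (j : J) : ε * k j ≤ X + ε := by
  cases hj : h j with
  | none =>
    rw [hs.unheld j hj]
    simp only [Nat.cast_zero, mul_zero]
    positivity
  | some i => linarith [hX i j _ (hs.nonneg i j hj)]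

theorem IsAuctionState.exists_step {I J : Type} [Fintype I] [Fintype J] {M : Market I J} {ε : ℝ}
    {k : J → ℕ} {h : J → Option I} (hs : IsAuctionState M ε k h) (hε : 0 < ε) {i : I}
    (hi : ∀ j, h j ≠ some i) (hpos : ∃ j, 0 < M.u i j (ε * k j)) :
    ∃ k' h', IsAuctionState M ε k' h' ∧ ∑ j, k j < ∑ j, k' j := by
  obtain ⟨j₁, hj₁⟩ := hpos
  have : Nonempty J := ⟨j₁⟩
  obtain ⟨j, hj⟩ := Finite.exists_max fun j => M.u i j (ε * k j)
  have hk : ∀ j', k j' ≤ Function.update k j (k j + 1) j' := fun j' => by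
    by_cases hjj : j' = j
    · subst hjj; simp
    · simp [hjj]
  have hu : ∀ i' j', M.u i' j' (ε * (Function.update k j (k j + 1) j' : ℕ)) ≤
      M.u i' j' (ε * k j') := fun i' j' =>
    (M.anti i' j').antitone (mul_le_mul_of_nonneg_left (Nat.cast_le.mpr (hk j')) hε.le)
  have hback : ε * ((k j + 1 : ℕ) : ℝ) - ε = ε * k j := by push_cast; ring
  refine ⟨Function.update k j (k j + 1), Function.update h j (some i), ⟨?_, ?_, ?_, ?_⟩, ?_⟩
  · intro i' a b ha hb
    by_cases haj : a = j <;> by_cases hbj : b = j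
    · rw [haj, hbj]
    · subst haj
      rw [Function.update_self] at ha
      rw [Function.update_of_ne hbj] at hb
      exact absurd (hb.trans ha.symm) (hi b)
    · subst hbj
      rw [Function.update_self] at hb
      rw [Function.update_of_ne haj] at ha
      exact absurd (ha.trans hb.symm) (hi a)
    · rw [Function.update_of_ne haj] at ha
      rw [Function.update_of_ne hbj] at hb
      exact hs.inj i' a b ha hb
  · intro a ha
    by_cases haj : a = j
    · subst haj; simp at ha
    · rw [Function.update_of_ne haj] at ha ⊢
      exact hs.unheld a ha
  · intro i' a ha
    by_cases haj : a = j
    · subst haj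
      rw [Function.update_self] at ha ⊢
      cases ha
      rw [hback]
      exact hj₁.le.trans (hj j₁)
    · rw [Function.update_of_ne haj] at ha ⊢
      exact hs.nonneg i' a ha
  · intro i' a ha b
    refine (hu i' b).trans ?_
    by_cases haj : a = j
    · subst haj
      rw [Function.update_self] at ha ⊢
      cases ha
      rw [hback]
      exact hj b
    · rw [Function.update_of_ne haj] at ha ⊢
      exact hs.envyFree i' a ha b
  · exact Finset.sum_lt_sum (fun a _ => hk a) ⟨j, Finset.mem_univ j, by simp⟩

theorem Market.exists_terminal_auctionState {I J : Type} [Fintype I] [Fintype J] (M : Market I J)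
    {ε : ℝ} (hε : 0 < ε) :
    ∃ k h, IsAuctionState M ε k h ∧
      ∀ i, (∀ j, h j ≠ some i) → ∀ j, M.u i j (ε * k j) ≤ 0 := by
  obtain ⟨X, hX0, hX⟩ := M.exists_price_bound
  by_contra! hcon
  have hlarge : ∀ n : ℕ, ∃ k h, IsAuctionState M ε k h ∧ n ≤ ∑ j, k j := by
    intro n
    induction n with
    | zero => exact ⟨0, fun _ => none, ⟨by simp, by simp, by simp, by simp⟩, Nat.zero_le _⟩
    | succ n ih =>
      obtain ⟨k, h, hs, hn⟩ := ih
      obtain ⟨i, hi, hpos⟩ := hcon k h hs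
      obtain ⟨k', h', hs', hlt⟩ := hs.exists_step hε hi hpos
      exact ⟨k', h', hs', by omega⟩
  obtain ⟨n, hn⟩ := exists_nat_gt (∑ _j : J, (X + ε) / ε)
  obtain ⟨k, h, hs, hle⟩ := hlarge n
  have hsum : ((∑ j, k j : ℕ) : ℝ) ≤ ∑ _j : J, (X + ε) / ε := by
    push_cast
    refine Finset.sum_le_sum fun j _ => ?_
    rw [le_div_iff₀ hε, mul_comm]
    exact hs.price_le hε hX0 hX j
  have : (n : ℝ) ≤ ((∑ j, k j : ℕ) : ℝ) := Nat.cast_le.mpr hle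
  linarith

/-- A matching described by the holder of each good yields an equilibrium. -/
theorem IsEquilib.of_holders {I J : Type} [Fintype I] [Fintype J] {M : Market I J} {p : J → ℝ}
    {h : J → Option I} (hinj : ∀ i j j', h j = some i → h j' = some i → j = j')
    (hp : ∀ j, 0 ≤ p j) (hunheld : ∀ j, h j = none → p j = 0)
    (hnonneg : ∀ i j, h j = some i → 0 ≤ M.u i j (p j))
    (henvy : ∀ i j, h j = some i → ∀ j', M.u i j' (p j') ≤ M.u i j (p j))
    (hout : ∀ i, (∀ j, h j ≠ some i) → ∀ j, M.u i j (p j) ≤ 0) :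
    ∃ w μ, IsEquilib M p w μ := by
  have hμ : ∀ i, ∃ o : Option J, ∀ j, o = some j ↔ h j = some i := by
    intro i
    by_cases hi : ∃ j, h j = some i
    · obtain ⟨j, hj⟩ := hi
      refine ⟨some j, fun j' => ⟨fun hjj => ?_, fun hj' => ?_⟩⟩
      · cases hjj; exact hj
      · rw [hinj i j j' hj hj']
    · exact ⟨none, fun j => by simpa using fun hj => hi ⟨j, hj⟩⟩
  choose μ hμ using hμ
  have hout' : ∀ i, μ i = none → ∀ j, M.u i j (p j) ≤ 0 := fun i hi =>
    hout i fun j hj => absurd ((hμ i j).mpr hj) (by simp [hi])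
  refine ⟨fun i => (μ i).elim 0 fun j => M.u i j (p j), μ, ?_, hp, ?_, ?_, ?_, ?_, ?_⟩
  · intro i i' j hi hi'
    rw [hμ] at hi hi'
    exact Option.some.inj (hi.symm.trans hi')
  · intro i
    cases hi : μ i with
    | none => simp [hi]
    | some j => simpa [hi] using hnonneg i j ((hμ i j).mp hi)
  · intro i j hi
    simp [hi]
  · intro i j
    cases hi : μ i with
    | none => simpa [hi] using hout' i hi j
    | some j' => simpa [hi] using henvy i j' ((hμ i j').mp hi) j
  · intro i hi
    simp [hi]
  · intro j hj
    refine hunheld j ?_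
    cases hh : h j with
    | none => rfl
    | some i => exact absurd ((hμ i j).mpr hh) (hj i)

theorem Market.exists_isEquilib {I J : Type} [Fintype I] [Fintype J] (M : Market I J) :
    ∃ p w μ, IsEquilib M p w μ := by
  obtain ⟨X, hX0, hX⟩ := M.exists_price_bound
  let ε : ℕ → ℝ := fun n => 1 / ((n : ℝ) + 1)
  have hε : ∀ n, 0 < ε n := fun n => Nat.one_div_pos_of_nat
  have hε1 : ∀ n, ε n ≤ 1 := fun n => by
    have : (0 : ℝ) ≤ n := n.cast_nonneg
    exact (div_le_one (by linarith)).mpr (by linarith)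
  choose k h hs hout using fun n => M.exists_terminal_auctionState (hε n)
  let U : Ultrafilter ℕ := Filter.hyperfilter ℕ
  have hU : (U : Filter ℕ) ≤ Filter.atTop := by
    rw [← Nat.cofinite_eq_atTop]; exact Filter.hyperfilter_le_cofinite
  have hεU : Filter.Tendsto ε U (nhds 0) :=
    (tendsto_one_div_add_atTop_nhds_zero_nat (𝕜 := ℝ)).mono_left hU
  obtain ⟨h₀, hh₀⟩ : ∃ h₀, ∀ᶠ n in (U : Filter ℕ), h n = h₀ :=
    Ultrafilter.eventually_exists_iff.mp (Filter.Eventually.of_forall fun n => ⟨h n, rfl⟩)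
  have hK : IsCompact (Set.Icc (fun _ : J => (0 : ℝ)) fun _ => X + 1) := isCompact_Icc
  obtain ⟨p, hpK, hp⟩ := hK.ultrafilter_le_nhds
    (U.map fun n j => ε n * (k n j : ℝ)) (by
      refine Filter.le_principal_iff.mpr (Filter.mem_map.mpr (Filter.Eventually.of_forall fun n => ?_))
      refine ⟨fun j => mul_nonneg (hε n).le (Nat.cast_nonneg _), fun j => ?_⟩
      linarith [(hs n).price_le (hε n) hX0 hX j, hε1 n])
  have hpj : ∀ j, Filter.Tendsto (fun n => ε n * (k n j : ℝ)) U (nhds (p j)) :=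
    tendsto_pi_nhds.mp hp
  have hu : ∀ i j, Filter.Tendsto (fun n => M.u i j (ε n * (k n j : ℝ))) U
      (nhds (M.u i j (p j))) := fun i j => ((M.cont i j).tendsto _).comp (hpj j)
  have hu' : ∀ i j, Filter.Tendsto (fun n => M.u i j (ε n * (k n j : ℝ) - ε n)) U
      (nhds (M.u i j (p j))) := fun i j =>
    ((M.cont i j).tendsto _).comp (by simpa using (hpj j).sub hεU)
  refine ⟨p, IsEquilib.of_holders (h := h₀) ?_ hpK.1 ?_ ?_ ?_ ?_⟩
  · obtain ⟨n, rfl⟩ := hh₀.exists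
    exact (hs n).inj
  · intro j hj
    refine tendsto_nhds_unique (hpj j) (tendsto_const_nhds.congr' ?_)
    filter_upwards [hh₀] with n hn
    simp [(hs n).unheld j (by rw [hn, hj])]
  · intro i j hj
    refine ge_of_tendsto (hu' i j) ?_
    filter_upwards [hh₀] with n hn
    exact (hs n).nonneg i j (by rw [hn, hj])
  · intro i j hj j'
    refine le_of_tendsto_of_tendsto (hu i j') (hu' i j) ?_
    filter_upwards [hh₀] with n hn
    exact (hs n).envyFree i j (by rw [hn, hj]) j'
  · intro i hi j
    refine le_of_tendsto (hu i j) ?_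
    filter_upwards [hh₀] with n hn
    exact hout n i (by rwa [hn]) j

/-- The market in which good `j` costs `r j` on top of its price. -/
def Market.addFees {I J : Type} [Fintype I] [Fintype J] (M : Market I J) (r : J → ℝ) :
    Market I J where
  u i j x := M.u i j (x + r j)
  cont i j := (M.cont i j).comp (continuous_id.add continuous_const)
  anti i j _ _ h := M.anti i j (add_lt_add_left h _)
  surj i j := (M.surj i j).comp (Equiv.addRight (r j)).surjective
  evNonpos i j := by
    obtain ⟨x, hx⟩ := M.evNonpos i j
    exact ⟨x - r j, fun y hy => hx _ (by linarith)⟩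

/-- An equilibrium in which `j0` is unassigned restricts to the market without `j0`. -/
theorem IsEquilib.removeGood {I J : Type} [Fintype I] [Fintype J] [DecidableEq J]
    {M : Market I J} {j0 : J} {p : J → ℝ} {w : I → ℝ} {μ : I → Option J}
    (h : IsEquilib M p w μ) (hj0 : ∀ i, μ i ≠ some j0) :
    ∃ μ', IsEquilib (M.removeGood j0) (fun j => p j) w μ' := by
  have hμ : ∀ i, ∃ o : Option {j : J // j ≠ j0}, o.map Subtype.val = μ i := by
    intro i
    cases hi : μ i with
    | none => exact ⟨none, rfl⟩
    | some j => exact ⟨some ⟨j, fun hj => hj0 i (hj ▸ hi)⟩, rfl⟩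
  choose μ' hμ' using hμ
  have hsome : ∀ {i j}, μ' i = some j → μ i = some j.1 := fun {i j} hi => by
    rw [← hμ', hi, Option.map_some]
  refine ⟨μ', fun i i' j hi hi' => h.inj (hsome hi) (hsome hi'), fun j => h.price_nonneg j,
    h.payoff_nonneg, fun i j hi => h.payoff_eq (hsome hi), fun i j => h.le_payoff i j,
    fun i hi => h.payoff_eq_zero (by rw [← hμ', hi, Option.map_none]), fun j hj => ?_⟩
  refine h.price_eq_zero fun i hi => ?_
  rw [← hμ', Option.map_eq_some_iff] at hi
  obtain ⟨j', hj', heq⟩ := hi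
  exact hj i (Subtype.ext heq ▸ hj')

section RemoveGood

variable {I J : Type} [Fintype I] [Fintype J] [DecidableEq J] {M : Market I J} {j0 : J}
  {p : J → ℝ} {w : I → ℝ} {μ : I → Option J}
  {pg : {j : J // j ≠ j0} → ℝ} {wg : I → ℝ} {μg : I → Option {j : J // j ≠ j0}}

theorem IsHighest.payoff_le_of_match_removed (hhigh : IsHighest M p w μ)
    (hlow : IsLowest (M.removeGood j0) pg wg μg) {i : I} (hi : μ i = some j0) :
    w i ≤ wg i := by
  have key : ∀ s, p j0 < s → M.u i j0 s ≤ wg i := by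
    intro s hs
    have hs0 : 0 ≤ s := (hhigh.1.price_nonneg j0).trans hs.le
    obtain ⟨q, v, ν, hq⟩ := (M.addFees (Pi.single j0 s)).exists_isEquilib
    have hoff : ∀ {j}, j ≠ j0 → q j + (Pi.single j0 s : J → ℝ) j = q j := fun hj => by
      simp [hj]
    have hunmatched : ∀ i', ν i' ≠ some j0 := by
      intro i' hi'
      have hE : IsEquilib M (fun j => q j + (Pi.single j0 s : J → ℝ) j) v ν := by
        refine ⟨hq.1, fun j => add_nonneg (hq.price_nonneg j) ?_, hq.2.2.1, hq.2.2.2.1,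
          hq.2.2.2.2.1, hq.2.2.2.2.2.1, fun j hj => ?_⟩
        · exact (Pi.single_nonneg (α := fun _ : J => ℝ)).mpr hs0 j
        · have hne : j ≠ j0 := fun hjj => hj i' (hjj ▸ hi')
          exact (hoff hne).trans (hq.price_eq_zero hj)
      have := hhigh.2 _ _ _ hE j0
      simp only [Pi.single_eq_same] at this
      linarith [hq.price_nonneg j0]
    obtain ⟨ν', hν'⟩ := hq.removeGood hunmatched
    have hE : IsEquilib (M.removeGood j0) (fun j => q j) v ν' := by
      have hu : ∀ i' (j : {j : J // j ≠ j0}),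
          ((M.addFees (Pi.single j0 s)).removeGood j0).u i' j (q j) =
            (M.removeGood j0).u i' j (q j) := fun i' j =>
        congrArg (M.u i' j) (hoff j.2)
      refine ⟨hν'.1, hν'.2.1, hν'.2.2.1, fun i' j h => ?_, fun i' j => ?_, hν'.2.2.2.2.2⟩
      · rw [← hu]; exact hν'.payoff_eq h
      · rw [← hu]; exact hν'.le_payoff i' j
    have hv := hq.le_payoff i j0
    simp only [Market.addFees, Pi.single_eq_same, hq.price_eq_zero hunmatched, zero_add] at hv
    exact hv.trans (hlow.1.payoff_le_of_price_le hE (hlow.2 _ _ _ hE) i)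
  rw [hhigh.1.payoff_eq hi]
  refine le_of_tendsto (((M.cont i j0).tendsto (p j0)).mono_left nhdsWithin_le_nhds :
    Filter.Tendsto _ (nhdsWithin (p j0) (Set.Ioi (p j0))) _) ?_
  filter_upwards [self_mem_nhdsWithin] with s hs using key s hs

theorem IsEquilib.removeGood_payoff_le_of_match_removed (h : IsEquilib M p w μ)
    (hg : IsEquilib (M.removeGood j0) pg wg μg) {i : I} (hi : μ i = some j0) :
    wg i ≤ w i := by
  by_contra! hlt
  have hf : ∀ a : {a // w a < wg a}, ∃ j, μg a = some j ∧ pg j < p j := by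
    rintro ⟨a, ha⟩
    obtain ⟨j, hj⟩ := hg.exists_match_of_payoff_pos ((h.payoff_nonneg a).trans_lt ha)
    refine ⟨j, hj, (M.anti a j).lt_iff_gt.mp ?_⟩
    exact ((h.le_payoff a j).trans_lt ha).trans_eq (hg.payoff_eq hj)
  have hb : ∀ j : {j : {j : J // j ≠ j0} // pg j < p j}, ∃ a, μ a = some j.1.1 ∧ w a < wg a := by
    rintro ⟨j, hj⟩
    obtain ⟨a, ha⟩ := h.exists_match_of_price_pos ((hg.price_nonneg j).trans_lt hj)
    refine ⟨a, ha, ?_⟩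
    rw [h.payoff_eq ha]
    exact (M.anti a j hj).trans_le (hg.le_payoff a j)
  choose f hf hfp using hf
  choose b hb hbw using hb
  have hF : Function.Injective fun a : {a // w a < wg a} =>
      (⟨f a, hfp a⟩ : {j : {j : J // j ≠ j0} // pg j < p j}) := by
    intro a a' haa
    have heq : f a = f a' := congrArg Subtype.val haa
    exact Subtype.ext (hg.inj (hf a) (heq ▸ hf a'))
  have hB : Function.Injective fun j : {j : {j : J // j ≠ j0} // pg j < p j} =>
      (⟨b j, hbw j⟩ : {a // w a < wg a}) := by
    intro j j' hjj
    have heq : b j = b j' := congrArg Subtype.val hjj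
    have := hb j
    rw [heq, hb j'] at this
    exact Subtype.ext (Subtype.ext (Option.some.inj this).symm)
  have hcard := le_antisymm (Fintype.card_le_of_injective _ hF) (Fintype.card_le_of_injective _ hB)
  obtain ⟨j, hj⟩ := ((Fintype.bijective_iff_injective_and_card _).mpr ⟨hB, hcard.symm⟩).2 ⟨i, hlt⟩
  have heq : b j = i := congrArg Subtype.val hj
  have := hb j
  rw [heq, hi] at this
  exact j.1.2 (Option.some.inj this).symm

/-- If no buyer who prefers the equilibrium of `M` holds `j0`, then the pointwise minimum of the two
price vectors supports an equilibrium of the market without `j0`, which gives these buyers their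
payoff in `M`. -/
theorem IsEquilib.removeGood_inf (h : IsEquilib M p w μ)
    (hg : IsEquilib (M.removeGood j0) pg wg μg) (hj0 : ∀ i, wg i < w i → μ i ≠ some j0) :
    ∃ ν, IsEquilib (M.removeGood j0) (fun j => min (p j) (pg j)) (fun i => max (w i) (wg i)) ν := by
  have hf : ∀ a : {a // wg a < w a}, ∃ j : {j : J // j ≠ j0}, μ a = some j.1 ∧ p j < pg j := by
    rintro ⟨a, ha⟩
    obtain ⟨j, hj⟩ := h.exists_match_of_payoff_pos ((hg.payoff_nonneg a).trans_lt ha)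
    refine ⟨⟨j, fun hjj => hj0 a ha (hjj ▸ hj)⟩, hj, (M.anti a j).lt_iff_gt.mp ?_⟩
    exact ((hg.le_payoff a ⟨j, _⟩).trans_lt ha).trans_eq (h.payoff_eq hj)
  have hb : ∀ {j : {j : J // j ≠ j0}} {a}, p j < pg j → μg a = some j → wg a < w a := by
    intro j a hj ha
    rw [hg.payoff_eq ha]
    exact (M.anti a j hj).trans_le (h.le_payoff a j)
  have hb' : ∀ j : {j : {j : J // j ≠ j0} // p j < pg j}, ∃ a, μg a = some j.1 := fun j =>
    hg.exists_match_of_price_pos ((h.price_nonneg _).trans_lt j.2)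
  choose f hf hfp using hf
  choose b hbμ using hb'
  have hF : Function.Injective fun a : {a // wg a < w a} =>
      (⟨f a, hfp a⟩ : {j : {j : J // j ≠ j0} // p j < pg j}) := by
    intro a a' haa
    have heq : f a = f a' := congrArg Subtype.val haa
    exact Subtype.ext (h.inj (hf a) (heq ▸ hf a'))
  have hB : Function.Injective fun j : {j : {j : J // j ≠ j0} // p j < pg j} =>
      (⟨b j, hb j.2 (hbμ j)⟩ : {a // wg a < w a}) := by
    intro j j' hjj
    have heq : b j = b j' := congrArg Subtype.val hjj
    have := hbμ j
    rw [heq, hbμ j'] at this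
    exact Subtype.ext (Option.some.inj this).symm
  have hcard := le_antisymm (Fintype.card_le_of_injective _ hF) (Fintype.card_le_of_injective _ hB)
  have hFsurj := ((Fintype.bijective_iff_injective_and_card _).mpr ⟨hF, hcard⟩).2
  have hBsurj := ((Fintype.bijective_iff_injective_and_card _).mpr ⟨hB, hcard.symm⟩).2
  have hb_of : ∀ {a j}, wg a < w a → μg a = some j → p j < pg j := by
    intro a j ha haj
    obtain ⟨j', hj'⟩ := hBsurj ⟨a, ha⟩
    have heq : b j' = a := congrArg Subtype.val hj'
    have := hbμ j'
    rw [heq, haj] at this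
    exact (Option.some.inj this) ▸ j'.2
  let ν : I → Option {j : J // j ≠ j0} := fun a =>
    if ha : wg a < w a then some (f ⟨a, ha⟩) else μg a
  have hν1 : ∀ a (ha : wg a < w a), ν a = some (f ⟨a, ha⟩) := fun a ha => dif_pos ha
  have hν2 : ∀ a, ¬ wg a < w a → ν a = μg a := fun a ha => dif_neg ha
  refine ⟨ν, ?_, fun j => le_min (h.price_nonneg j) (hg.price_nonneg j),
    fun a => le_max_of_le_left (h.payoff_nonneg a), ?_, ?_, ?_, ?_⟩
  · intro a a' j ha ha'
    by_cases hA : wg a < w a <;> by_cases hA' : wg a' < w a'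
    · rw [hν1 a hA] at ha
      rw [hν1 a' hA'] at ha'
      have := hf ⟨a, hA⟩
      rw [Option.some.inj (ha.trans ha'.symm)] at this
      exact h.inj this (hf ⟨a', hA'⟩)
    · rw [hν1 a hA] at ha
      rw [hν2 a' hA'] at ha'
      exact absurd (hb (Option.some.inj ha ▸ hfp ⟨a, hA⟩) ha') hA'
    · rw [hν2 a hA] at ha
      rw [hν1 a' hA'] at ha'
      exact absurd (hb (Option.some.inj ha' ▸ hfp ⟨a', hA'⟩) ha) hA
    · rw [hν2 a hA] at ha
      rw [hν2 a' hA'] at ha'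
      exact hg.inj ha ha'
  · intro a j ha
    by_cases hA : wg a < w a
    · rw [hν1 a hA] at ha
      cases ha
      simp only [max_eq_left hA.le, min_eq_left (hfp ⟨a, hA⟩).le]
      exact h.payoff_eq (hf ⟨a, hA⟩)
    · rw [hν2 a hA] at ha
      have hj : pg j ≤ p j := not_lt.mp fun hj => hA (hb hj ha)
      simp only [max_eq_right (not_lt.mp hA), min_eq_right hj]
      exact hg.payoff_eq ha
  · intro a j
    rcases min_choice (p j) (pg j) with hm | hm <;> simp only [hm]
    · exact le_max_of_le_left (h.le_payoff a j)
    · exact le_max_of_le_right (hg.le_payoff a j)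
  · intro a ha
    by_cases hA : wg a < w a
    · simp [hν1 a hA] at ha
    · rw [hν2 a hA] at ha
      simp only [max_eq_right (not_lt.mp hA)]
      exact hg.payoff_eq_zero ha
  · intro j hj
    by_cases hlt : p j < pg j
    · obtain ⟨a, ha⟩ := hFsurj ⟨j, hlt⟩
      refine absurd ?_ (hj a)
      rw [hν1 a a.2]
      exact congrArg some (congrArg Subtype.val ha)
    · simp only [min_eq_right (not_lt.mp hlt)]
      refine hg.price_eq_zero fun a ha => ?_
      by_cases hA : wg a < w a
      · exact hlt (hb_of hA ha)
      · exact hj a ((hν2 a hA).trans ha)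

end RemoveGood

/-- Payoff monotonicity under good removal: the payoff of any buyer `i` at the
highest equilibrium of `M` is at most her payoff at the lowest equilibrium of
`M` without good `j0`, with equality when `i` is matched to `j0` at the
highest equilibrium of `M`. -/
theorem payoff_le_removeGood {I J : Type} [Fintype I] [Fintype J] [DecidableEq J]
    (M : Market I J) (j0 : J)
    (p : J → ℝ) (w : I → ℝ) (μ : I → Option J) (hhigh : IsHighest M p w μ)
    (pg : {j : J // j ≠ j0} → ℝ) (wg : I → ℝ) (μg : I → Option {j : J // j ≠ j0})
    (hlow : IsLowest (M.removeGood j0) pg wg μg) (i : I) :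
    w i ≤ wg i ∧ (μ i = some j0 → w i = wg i) := by
  have hle : ∀ {i}, μ i = some j0 → w i ≤ wg i := fun hi =>
    hhigh.payoff_le_of_match_removed hlow hi
  refine ⟨?_, fun hi => le_antisymm (hle hi)
    (hhigh.1.removeGood_payoff_le_of_match_removed hlow.1 hi)⟩
  obtain ⟨ν, hν⟩ := hhigh.1.removeGood_inf hlow.1 fun i hlt hi => hlt.not_ge (hle hi)
  exact (le_max_left _ _).trans (hlow.1.payoff_le_of_price_le hν (hlow.2 _ _ _ hν) i)
end

section
/- (Continuum of equilibria) In a unit-demand market with |I| = |J|, if the lowest and highest competitive equilibria W_low and W_high are distinct, then there exists a continuum of competitive equilibria: a map t ↦ W(t) on [0,1] with W(0) = W_low, W(1) = W_high, such that each W(t) is a competitive equilibrium whose price vector dominates (1−t)p(W_low) + t·p(W_high) componentwise, and the map is injective. -/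
attribute [local instance] Classical.propDecidable

/-- An approximate ascending auction with grid step `ε` and reserve prices `r`: it ends with all
buyers matched, one good at most one step above its reserve price, and no buyer preferring another
good at one step above its current price. The bound `Y` on the prices does not depend on `ε`. -/
theorem exists_approx_envyFree {A B : Type} [Fintype A] [Fintype B] [Nonempty B]
    (hcard : Fintype.card A = Fintype.card B) (u : A → B → ℝ → ℝ)
    (hanti : ∀ a b, StrictAnti (u a b)) (r Y : B → ℝ) (hrY : ∀ b, r b ≤ Y b)
    (hY : ∀ a b b₀ y, u a b₀ (r b₀ + 2) ≤ u a b y → y ≤ Y b)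
    (ε : ℝ) (hε : 0 < ε) (hε1 : ε ≤ 1) :
    ∃ (σ : A ≃ B) (b₀ : B) (x : B → ℝ), (∀ b, r b ≤ x b) ∧ (∀ b, x b ≤ Y b) ∧
      x b₀ ≤ r b₀ + ε ∧ ∀ a b, u a b (x b + ε) ≤ u a (σ a) (x (σ a)) := by
  let Valid (m : A → Option B) (k : B → ℕ) : Prop :=
    (∀ a a' b, m a = some b → m a' = some b → a = a') ∧
    (∀ b, (∀ a, m a ≠ some b) → k b = 0) ∧
    (∀ a b, m a = some b → ∀ b', u a b' (r b' + k b' * ε + ε) ≤ u a b (r b + k b * ε)) ∧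
    ∃ b, k b ≤ 1
  have bound : ∀ m k, Valid m k → ∀ b, r b + k b * ε ≤ Y b := by
    rintro m k ⟨-, hzero, hopt, b₀, hb₀⟩ b
    by_cases hb : ∀ a, m a ≠ some b
    · simpa [hzero b hb] using hrY b
    · push Not at hb
      obtain ⟨a, ha⟩ := hb
      refine hY a b b₀ _ (le_trans ((hanti a b₀).antitone ?_) (hopt a b ha b₀))
      have : (k b₀ : ℝ) ≤ 1 := by exact_mod_cast hb₀
      nlinarith
  by_cases hfull : ∃ m k, Valid m k ∧ ∀ a, m a ≠ none
  · obtain ⟨m, k, hv, hm⟩ := hfull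
    choose f hf using fun a => Option.ne_none_iff_exists'.1 (hm a)
    have hinj : Function.Injective f := fun a a' h =>
      hv.1 a a' (f a) (hf a) (by rw [hf a', h])
    obtain ⟨b₀, hb₀⟩ := hv.2.2.2
    refine ⟨Equiv.ofBijective f ((Fintype.bijective_iff_injective_and_card f).2 ⟨hinj, hcard⟩),
      b₀, fun b => r b + k b * ε, fun b => ?_, bound m k hv, ?_, fun a b => ?_⟩
    · have : (0 : ℝ) ≤ k b * ε := by positivity
      linarith
    · have : (k b₀ : ℝ) ≤ 1 := by exact_mod_cast hb₀
      nlinarith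
    · exact hv.2.2.1 a (f a) (hf a) b
  exfalso
  push Not at hfull
  have step : ∀ N : ℕ, ∃ m k, Valid m k ∧ N ≤ ∑ b, k b := by
    intro N
    induction N with
    | zero =>
      exact ⟨fun _ => none, fun _ => 0,
        ⟨by simp, by simp, by simp, Classical.arbitrary B, by simp⟩, by simp⟩
    | succ N ih =>
      obtain ⟨m, k, hv, hN⟩ := ih
      obtain ⟨a, ha⟩ := hfull m k hv
      obtain ⟨hinj, hzero, hopt, -⟩ := hv
      have hb₁ : ∃ b, ∀ a, m a ≠ some b := by
        by_contra! hcon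
        choose g hg using hcon
        have ginj : Function.Injective g := fun b b' h => by
          have h1 := hg b
          rw [h, hg b'] at h1
          exact (Option.some.inj h1).symm
        obtain ⟨b, rfl⟩ := ((Fintype.bijective_iff_injective_and_card g).2 ⟨ginj, hcard.symm⟩).2 a
        simp [hg b] at ha
      obtain ⟨b₁, hb₁⟩ := hb₁
      obtain ⟨b, hb⟩ := Finite.exists_max fun b => u a b (r b + k b * ε + ε)
      have hk : ∀ c, k c ≤ Function.update k b (k b + 1) c := by
        intro c
        by_cases hc : c = b
        · subst hc; simp
        · simp [hc]
      have hmono : ∀ a c, u a c (r c + (Function.update k b (k b + 1) c : ℕ) * ε + ε)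
          ≤ u a c (r c + k c * ε + ε) := by
        intro a c
        apply (hanti a c).antitone
        have : (k c : ℝ) ≤ (Function.update k b (k b + 1) c : ℕ) := by exact_mod_cast hk c
        nlinarith
      refine ⟨fun a' => if a' = a then some b else if m a' = some b then none else m a',
        Function.update k b (k b + 1), ⟨?_, ?_, ?_, b₁, ?_⟩, ?_⟩
      · intro a₁ a₂ c h₁ h₂
        have := hinj a₁ a₂ c
        grind
      · intro c hc
        have hcb : c ≠ b := by
          rintro rfl
          exact hc a (by simp)
        rw [Function.update_of_ne hcb]
        refine hzero c fun a' ha' => hc a' ?_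
        have : a' ≠ a := by rintro rfl; simp [ha] at ha'
        simp [this, ha', hcb]
      · intro a' c hc b'
        refine (hmono a' b').trans ?_
        by_cases haa : a' = a
        · subst haa
          obtain rfl : b = c := by simpa using hc
          refine (hb b').trans (le_of_eq ?_)
          congr 1
          rw [Function.update_self]
          push_cast
          ring
        · have hcb : c ≠ b := by
            rintro rfl
            simp only [haa, if_false] at hc
            split_ifs at hc with h
            exact h hc
          have hmc : m a' = some c := by
            simp only [haa, if_false] at hc
            split_ifs at hc with h
            exact hc
          rw [Function.update_of_ne hcb]
          exact hopt a' c hmc b'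
      · have := hzero b₁ hb₁
        by_cases h : b₁ = b
        · subst h; simp [this]
        · simp [h, this]
      · have : ∑ c, k c < ∑ c, Function.update k b (k b + 1) c :=
          Finset.sum_lt_sum (fun c _ => hk c) ⟨b, Finset.mem_univ _, by simp⟩
        omega
  obtain ⟨N, hN⟩ := exists_nat_gt ((∑ b, (Y b - r b)) / ε)
  obtain ⟨m, k, hv, hk⟩ := step N
  rw [div_lt_iff₀ hε] at hN
  have h1 : (∑ b, (k b : ℝ)) * ε ≤ ∑ b, (Y b - r b) := by
    rw [Finset.sum_mul]
    exact Finset.sum_le_sum fun b _ => by linarith [bound m k hv b]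
  have h2 : (N : ℝ) ≤ ∑ b, (k b : ℝ) := by exact_mod_cast hk
  nlinarith

/-- Envy-free assignments of as many goods as buyers exist above any reserve prices `r`, with
some good sold exactly at its reserve price. -/
theorem exists_envyFree_tight {A B : Type} [Fintype A] [Fintype B] [Nonempty B]
    (hcard : Fintype.card A = Fintype.card B) (u : A → B → ℝ → ℝ)
    (hcont : ∀ a b, Continuous (u a b)) (hanti : ∀ a b, StrictAnti (u a b))
    (hsurj : ∀ a b, Function.Surjective (u a b)) (r : B → ℝ) :
    ∃ (σ : A ≃ B) (b₀ : B) (x : B → ℝ), (∀ b, r b ≤ x b) ∧ x b₀ = r b₀ ∧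
      ∀ a b, u a b (x b) ≤ u a (σ a) (x (σ a)) := by
  obtain ⟨Y, hrY, hY⟩ : ∃ Y : B → ℝ, (∀ b, r b ≤ Y b) ∧
      ∀ a b b₀ y, u a b₀ (r b₀ + 2) ≤ u a b y → y ≤ Y b := by
    choose z hz using fun a b b₀ => hsurj a b (u a b₀ (r b₀ + 2))
    have hpos : ∀ b a, 0 ≤ ∑ b₀, |z a b b₀| := fun b a => Finset.sum_nonneg fun _ _ => abs_nonneg _
    refine ⟨fun b => |r b| + ∑ a, ∑ b₀, |z a b b₀|, fun b => ?_, fun a b b₀ y hy => ?_⟩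
    · have := Finset.sum_nonneg fun a (_ : a ∈ Finset.univ) => hpos b a
      linarith [le_abs_self (r b)]
    · rw [← hz a b b₀, (hanti a b).le_iff_ge] at hy
      have h1 := Finset.single_le_sum (f := fun a => ∑ b₀, |z a b b₀|) (fun a _ => hpos b a)
        (Finset.mem_univ a)
      have h2 := Finset.single_le_sum (f := fun b₀ => |z a b b₀|) (fun _ _ => abs_nonneg _)
        (Finset.mem_univ b₀)
      linarith [le_abs_self (z a b b₀), abs_nonneg (r b)]
  let Approx (s : (A ≃ B) × B) (ε : ℝ) (x : B → ℝ) : Prop :=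
    (∀ b, r b ≤ x b) ∧ (∀ b, x b ≤ Y b) ∧
      x s.2 ≤ r s.2 + ε ∧ ∀ a b, u a b (x b + ε) ≤ u a (s.1 a) (x (s.1 a))
  have hmono : ∀ s ε ε' x, ε ≤ ε' → Approx s ε x → Approx s ε' x := by
    rintro s ε ε' x h ⟨h1, h2, h3, h4⟩
    exact ⟨h1, h2, by linarith, fun a b => ((hanti a b).antitone (by linarith)).trans (h4 a b)⟩
  have key : ∃ s, ∀ ε > 0, ∃ x, Approx s ε x := by
    by_contra! hcon
    choose e he hbad using hcon
    have : Nonempty ((A ≃ B) × B) := ⟨Fintype.equivOfCardEq hcard, Classical.arbitrary B⟩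
    obtain ⟨s₀, hs₀⟩ := Finite.exists_min e
    obtain ⟨σ, b₀, x, hx⟩ := exists_approx_envyFree hcard u hanti r Y hrY hY (min (e s₀) 1)
      (lt_min (he s₀) one_pos) (min_le_right _ _)
    exact hbad (σ, b₀) x (hmono _ _ _ x ((min_le_left _ _).trans (hs₀ _)) hx)
  obtain ⟨⟨σ, b₀⟩, hs⟩ := key
  choose x hx using fun n : ℕ => hs (1 / ((n : ℝ) + 1)) Nat.one_div_pos_of_nat
  obtain ⟨y, hy, φ, hφ, hlim⟩ := (isCompact_Icc (a := r) (b := Y)).tendsto_subseq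
    (x := x) fun n => ⟨(hx n).1, (hx n).2.1⟩
  have hε : Filter.Tendsto (fun n => 1 / ((φ n : ℝ) + 1)) Filter.atTop (nhds 0) :=
    (tendsto_one_div_add_atTop_nhds_zero_nat (𝕜 := ℝ)).comp hφ.tendsto_atTop
  have hc : ∀ b, Filter.Tendsto (fun n => x (φ n) b) Filter.atTop (nhds (y b)) :=
    fun b => (tendsto_pi_nhds.1 hlim) b
  refine ⟨σ, b₀, y, hy.1, le_antisymm ?_ (hy.1 b₀), fun a b => ?_⟩
  · have h := hε.const_add (r b₀)
    rw [add_zero] at h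
    exact le_of_tendsto_of_tendsto' (hc b₀) h fun n => (hx (φ n)).2.2.1
  · have h := (hc b).add hε
    rw [add_zero] at h
    exact le_of_tendsto_of_tendsto' (((hcont a b).tendsto _).comp h)
      (((hcont a (σ a)).tendsto _).comp (hc (σ a))) fun n => (hx (φ n)).2.2.2 a b

/-- The componentwise minimum of two envy-free price vectors is envy-free. -/
theorem exists_envyFree_min {A B : Type} [Finite B] (u : A → B → ℝ → ℝ)
    (hanti : ∀ a b, StrictAnti (u a b)) (x y : B → ℝ) (σ τ : A ≃ B)
    (hσ : ∀ a b, u a b (x b) ≤ u a (σ a) (x (σ a)))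
    (hτ : ∀ a b, u a b (y b) ≤ u a (τ a) (y (τ a))) :
    ∃ ρ : A ≃ B, ∀ a b, u a b (min (x b) (y b)) ≤ u a (ρ a) (min (x (ρ a)) (y (ρ a))) := by
  have : Finite A := Finite.of_equiv B σ.symm
  have hle : ∀ a b, y b ≤ x b → u a b (x b) ≤ u a b (y b) := fun a b h => (hanti a b).antitone h
  have hle' : ∀ a b, x b ≤ y b → u a b (y b) ≤ u a b (x b) := fun a b h => (hanti a b).antitone h
  have hmaps : ∀ a, y (σ a) < x (σ a) → y (τ a) < x (τ a) := by
    intro a ha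
    by_contra! hcon
    linarith [hanti a (σ a) ha, hτ a (σ a), hσ a (τ a), hle' a (τ a) hcon]
  have hback : ∀ a, y (τ a) < x (τ a) → y (σ a) < x (σ a) := by
    intro a ha
    have := Equiv.Perm.perm_symm_on_of_perm_on_finite (p := fun b => y b < x b)
      (f := σ.symm.trans τ) (fun b hb => hmaps (σ.symm b) (by simpa using hb)) ha
    simpa using this
  let f : A → B := fun a => if y (σ a) < x (σ a) then τ a else σ a
  have hinj : Function.Injective f := by
    intro a a' h
    have := hmaps a
    have := hmaps a'
    have := σ.injective.eq_iff (a := a) (b := a')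
    have := τ.injective.eq_iff (a := a) (b := a')
    grind
  have hbij : Function.Bijective f := by
    refine ⟨hinj, ?_⟩
    have h := Finite.surjective_of_injective (f := f ∘ σ.symm) (hinj.comp σ.symm.injective)
    exact Function.Surjective.of_comp h
  refine ⟨Equiv.ofBijective f hbij, fun a b => ?_⟩
  change _ ≤ u a (f a) (min (x (f a)) (y (f a)))
  by_cases ha : y (σ a) < x (σ a)
  · have hτa := hmaps a ha
    have hfa : f a = τ a := if_pos ha
    rw [hfa, min_eq_right hτa.le]
    rcases le_total (x b) (y b) with hb | hb
    · rw [min_eq_left hb]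
      linarith [hσ a b, hτ a (σ a), hle a (σ a) ha.le]
    · rw [min_eq_right hb]
      exact hτ a b
  · have hτa : x (τ a) ≤ y (τ a) := by
      by_contra! h
      exact ha (hback a h)
    have hfa : f a = σ a := if_neg ha
    rw [hfa, min_eq_left (not_lt.1 ha)]
    rcases le_total (x b) (y b) with hb | hb
    · rw [min_eq_left hb]
      exact hσ a b
    · rw [min_eq_right hb]
      linarith [hτ a b, hσ a (τ a), hle' a (τ a) hτa]

/-- Let `p ≤ p'` be equilibrium price vectors with `p ≠ p'` and let `q` lie between them. Then some
equilibrium has prices at least `q`, with equality at a good on which `p` and `p'` differ. -/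
theorem exists_isEquilib_tight {I J : Type} [Fintype I] [Fintype J] (M : Market I J)
    {p : J → ℝ} {w : I → ℝ} {μ : I → Option J} (h : IsEquilib M p w μ)
    {p' : J → ℝ} {w' : I → ℝ} {μ' : I → Option J} (h' : IsEquilib M p' w' μ')
    (hpp : p ≤ p') (hne : p ≠ p') (q : J → ℝ) (hpq : p ≤ q) (hqp : q ≤ p') :
    ∃ W : (J → ℝ) × (I → ℝ) × (I → Option J), IsEquilib M W.1 W.2.1 W.2.2 ∧ q ≤ W.1 ∧
      ∃ j, p j < p' j ∧ W.1 j = q j := by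
  obtain ⟨inj, p0, w0, wm, wopt, wnone, pun⟩ := h
  obtain ⟨inj', p0', w0', wm', wopt', wnone', pun'⟩ := h'
  let B := {j : J // p j < p' j}
  let A := {i : I // ∃ j, p j < p' j ∧ μ' i = some j}
  have eqOff : ∀ j, ¬ p j < p' j → p j = p' j := fun j hj => le_antisymm (hpp j) (not_lt.1 hj)
  obtain ⟨j₀, hj₀⟩ : ∃ j, p j < p' j := by
    by_contra! hcon
    exact hne (funext fun j => eqOff j (not_lt.2 (hcon j)))
  have : Nonempty B := ⟨⟨j₀, hj₀⟩⟩
  have hτ : ∃ τ : A ≃ B, ∀ a : A, μ' a = some (τ a : J) := by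
    choose f hf hf' using fun a : A => a.2
    let g : A → B := fun a => ⟨f a, hf a⟩
    have hg : Function.Bijective g := by
      constructor
      · intro a a' haa
        have hfa : f a = f a' := congrArg Subtype.val haa
        exact Subtype.ext (inj' a a' (f a) (hf' a) (by rw [hf' a', hfa]))
      · rintro ⟨j, hj⟩
        have : ∃ i, μ' i = some j := by
          by_contra! hcon
          linarith [pun' j hcon, p0 j]
        obtain ⟨i, hi⟩ := this
        refine ⟨⟨i, j, hj, hi⟩, Subtype.ext ?_⟩
        have := hf' ⟨i, j, hj, hi⟩
        exact Option.some.inj (this.symm.trans hi)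
    exact ⟨Equiv.ofBijective g hg, hf'⟩
  obtain ⟨τ, hτ⟩ := hτ
  have hwA : ∀ a : A, ∃ b : B, μ a = some (b : J) := by
    intro a
    have hlt : w' a < w a := by
      rw [wm' a _ (hτ a)]
      exact lt_of_lt_of_le (M.anti _ _ (τ a).2) (wopt a _)
    cases hμ : μ a with
    | none => linarith [wnone a hμ, w0' a]
    | some j =>
      by_cases hj : p j < p' j
      · exact ⟨⟨j, hj⟩, rfl⟩
      · have := wopt' a j
        rw [← eqOff j hj, ← wm a j hμ] at this
        linarith
  choose κ hκ using hwA
  have hκs : Function.Surjective κ := by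
    have hi : Function.Injective κ := fun a a' haa =>
      Subtype.ext (inj a a' (κ a) (hκ a) (by rw [hκ a', haa]))
    have hs := Finite.surjective_of_injective (f := κ ∘ τ.symm) (hi.comp τ.symm.injective)
    exact Function.Surjective.of_comp hs
  have hout : ∀ i, (¬ ∃ j, p j < p' j ∧ μ' i = some j) → w i ≤ w' i := by
    intro i hi
    cases hμ : μ i with
    | none => rw [wnone i hμ]; exact w0' i
    | some j =>
      by_cases hj : p j < p' j
      · obtain ⟨a, ha⟩ := hκs ⟨j, hj⟩
        have h1 := hκ a
        rw [ha] at h1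
        exact absurd (inj a i j h1 hμ ▸ a.2) hi
      · rw [wm i j hμ, eqOff j hj]
        exact wopt' i j
  obtain ⟨σ, b₀, x, hx, hxb, hσ⟩ := exists_envyFree_tight (Fintype.card_congr τ)
    (fun (a : A) (b : B) => M.u a b) (fun _ _ => M.cont _ _) (fun _ _ => M.anti _ _)
    (fun _ _ => M.surj _ _) (fun b => q b)
  obtain ⟨ρ, hρ⟩ := exists_envyFree_min (fun (a : A) (b : B) => M.u a b) (fun _ _ => M.anti _ _)
    x (fun b => p' b) σ τ hσ (fun a b => by
      simp only [← wm' a _ (hτ a)]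
      exact wopt' a b)
  let P : J → ℝ := fun j => if hj : p j < p' j then min (x ⟨j, hj⟩) (p' j) else p' j
  let m : I → Option J := fun i =>
    if hi : ∃ j, p j < p' j ∧ μ' i = some j then some (ρ ⟨i, hi⟩ : J) else μ' i
  let v : I → ℝ := fun i =>
    if hi : ∃ j, p j < p' j ∧ μ' i = some j then M.u i (ρ ⟨i, hi⟩) (P (ρ ⟨i, hi⟩)) else w' i
  have hPB : ∀ b : B, P b = min (x b) (p' b) := fun b => dif_pos b.2
  have hPoff : ∀ j, ¬ p j < p' j → P j = p' j := fun j hj => dif_neg hj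
  have hmA : ∀ a : A, m a = some (ρ a : J) := fun a => dif_pos a.2
  have hmoff : ∀ i, (¬ ∃ j, p j < p' j ∧ μ' i = some j) → m i = μ' i := fun i hi => dif_neg hi
  have hvA : ∀ a : A, v a = M.u a (ρ a) (P (ρ a)) := fun a => dif_pos a.2
  have hvoff : ∀ i, (¬ ∃ j, p j < p' j ∧ μ' i = some j) → v i = w' i := fun i hi => dif_neg hi
  have hqP : q ≤ P := by
    intro j
    by_cases hj : p j < p' j
    · rw [hPB ⟨j, hj⟩]
      exact le_min (hx ⟨j, hj⟩) (hqp j)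
    · rw [hPoff j hj]
      exact hqp j
  have hPp : P ≤ p' := by
    intro j
    by_cases hj : p j < p' j
    · rw [hPB ⟨j, hj⟩]
      exact min_le_right _ _
    · rw [hPoff j hj]
  have hvB : ∀ (a : A) (b : B), M.u a b (P b) ≤ v a := by
    intro a b
    rw [hvA, hPB, hPB]
    exact hρ a b
  have hwv : ∀ i, w' i ≤ v i := by
    intro i
    by_cases hi : ∃ j, p j < p' j ∧ μ' i = some j
    · refine le_trans ?_ (hvB ⟨i, hi⟩ (τ ⟨i, hi⟩))
      rw [wm' i _ (hτ ⟨i, hi⟩)]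
      exact (M.anti _ _).antitone (hPp _)
    · rw [hvoff i hi]
  refine ⟨(P, v, m), ⟨?_, ?_, ?_, ?_, ?_, ?_, ?_⟩, hqP, b₀, b₀.2, ?_⟩
  · intro i i' j hi hi'
    change m i = some j at hi
    change m i' = some j at hi'
    have hmem : ∀ i, m i = some j → ((∃ j, p j < p' j ∧ μ' i = some j) ↔ p j < p' j) := by
      intro i hij
      constructor
      · intro hi
        rw [hmA ⟨i, hi⟩] at hij
        exact Option.some.inj hij ▸ (ρ ⟨i, hi⟩).2
      · intro hj
        by_contra hi
        rw [hmoff i hi] at hij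
        exact hi ⟨j, hj, hij⟩
    by_cases hj : p j < p' j
    · have hiA := (hmem i hi).2 hj
      have hiA' := (hmem i' hi').2 hj
      rw [hmA ⟨i, hiA⟩] at hi
      rw [hmA ⟨i', hiA'⟩] at hi'
      have := ρ.injective (Subtype.ext (Option.some.inj (hi.trans hi'.symm)))
      exact congrArg Subtype.val this
    · have hiA := mt (hmem i hi).1 hj
      have hiA' := mt (hmem i' hi').1 hj
      rw [hmoff i hiA] at hi
      rw [hmoff i' hiA'] at hi'
      exact inj' i i' j hi hi'
  · exact fun j => (p0 j).trans ((hpq j).trans (hqP j))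
  · exact fun i => (w0' i).trans (hwv i)
  · intro i j hij
    change m i = some j at hij
    change v i = M.u i j (P j)
    by_cases hi : ∃ j, p j < p' j ∧ μ' i = some j
    · rw [hmA ⟨i, hi⟩] at hij
      rw [hvA ⟨i, hi⟩, Option.some.inj hij]
    · rw [hmoff i hi] at hij
      rw [hvoff i hi, hPoff j fun hj => hi ⟨j, hj, hij⟩]
      exact wm' i j hij
  · intro i j
    change M.u i j (P j) ≤ v i
    by_cases hj : p j < p' j
    · by_cases hi : ∃ j, p j < p' j ∧ μ' i = some j
      · exact hvB ⟨i, hi⟩ ⟨j, hj⟩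
      · rw [hvoff i hi]
        exact ((M.anti i j).antitone ((hpq j).trans (hqP j))).trans ((wopt i j).trans (hout i hi))
    · rw [hPoff j hj]
      exact (wopt' i j).trans (hwv i)
  · intro i hi
    change m i = none at hi
    change v i = 0
    by_cases hiA : ∃ j, p j < p' j ∧ μ' i = some j
    · simp [hmA ⟨i, hiA⟩] at hi
    · rw [hmoff i hiA] at hi
      rw [hvoff i hiA]
      exact wnone' i hi
  · intro j hj
    change P j = 0
    by_cases hjB : p j < p' j
    · refine absurd ?_ (hj (ρ.symm ⟨j, hjB⟩))
      change m _ = some j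
      rw [hmA, Equiv.apply_symm_apply]
    · rw [hPoff j hjB]
      refine pun' j fun i hi => hj i ?_
      change m i = some j
      rw [hmoff i, hi]
      rintro ⟨j', hj', hij'⟩
      exact hjB (Option.some.inj (hij'.symm.trans hi) ▸ hj')
  · change P b₀ = q b₀
    rw [hPB, hxb]
    exact min_eq_left (hqp b₀)

/-- Continuum of equilibria: if `|I| = |J|` and the lowest and highest
equilibria are distinct, there is an injective map `t ↦ W(t)` on `[0,1]` of
competitive equilibria interpolating between them, with `W(t)`'s prices
dominating the convex combination `(1-t)·p_low + t·p_high`. -/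
theorem continuum_of_equilibria {I J : Type} [Fintype I] [Fintype J]
    (M : Market I J) (hcard : Fintype.card I = Fintype.card J)
    (pl : J → ℝ) (wl : I → ℝ) (μl : I → Option J) (hlow : IsLowest M pl wl μl)
    (ph : J → ℝ) (wh : I → ℝ) (μh : I → Option J) (hhigh : IsHighest M ph wh μh)
    (hne : pl ≠ ph) :
    ∃ P : ℝ → (J → ℝ) × (I → ℝ) × (I → Option J),
      (∀ t ∈ Set.Icc (0:ℝ) 1, IsEquilib M (P t).1 (P t).2.1 (P t).2.2) ∧
      (P 0).1 = pl ∧ (P 1).1 = ph ∧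
      (∀ t ∈ Set.Icc (0:ℝ) 1, ∀ j, (1 - t) * pl j + t * ph j ≤ (P t).1 j) ∧
      Set.InjOn P (Set.Icc (0:ℝ) 1) := by
  have hle : pl ≤ ph := hlow.2 ph wh μh hhigh.1
  obtain ⟨j₀, hj₀⟩ : ∃ j, pl j < ph j := by
    by_contra! hcon
    exact hne (funext fun j => le_antisymm (hle j) (hcon j))
  have key : ∀ t : ℝ, ∃ W : (J → ℝ) × (I → ℝ) × (I → Option J),
      (t ∈ Set.Icc (0:ℝ) 1 → IsEquilib M W.1 W.2.1 W.2.2 ∧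
        (∀ j, (1 - t) * pl j + t * ph j ≤ W.1 j) ∧
        ∃ j, pl j < ph j ∧ W.1 j = (1 - t) * pl j + t * ph j) ∧
      (t = 0 → W.1 = pl) ∧ (t = 1 → W.1 = ph) := by
    intro t
    by_cases h0 : t = 0
    · subst h0
      exact ⟨(pl, wl, μl), fun _ => ⟨hlow.1, by simp, j₀, hj₀, by simp⟩, by simp, by simp⟩
    by_cases h1 : t = 1
    · subst h1
      exact ⟨(ph, wh, μh), fun _ => ⟨hhigh.1, by simp, j₀, hj₀, by simp⟩, by simp, by simp⟩
    by_cases ht : t ∈ Set.Icc (0:ℝ) 1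
    · obtain ⟨W, hW⟩ := exists_isEquilib_tight M hlow.1 hhigh.1 hle hne
        (fun j => (1 - t) * pl j + t * ph j)
        (fun j => by simp only; nlinarith [hle j, ht.1])
        (fun j => by simp only; nlinarith [hle j, ht.2])
      exact ⟨W, fun _ => hW, fun h => absurd h h0, fun h => absurd h h1⟩
    · exact ⟨(pl, wl, μl), fun h => absurd h ht, fun h => absurd h h0, fun h => absurd h h1⟩
  choose P hP hP0 hP1 using key
  have hlt : ∀ s ∈ Set.Icc (0:ℝ) 1, ∀ t ∈ Set.Icc (0:ℝ) 1, s < t → P s ≠ P t := by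
    intro s hs t ht hst heq
    obtain ⟨-, -, j, hj, hsj⟩ := hP s hs
    have htj := (hP t ht).2.1 j
    rw [← heq, hsj] at htj
    nlinarith
  refine ⟨P, fun t ht => (hP t ht).1, hP0 0 rfl, hP1 1 rfl, fun t ht => (hP t ht).2.1, ?_⟩
  intro s hs t ht heq
  rcases lt_trichotomy s t with h | h | h
  · exact absurd heq (hlt s hs t ht h)
  · exact h
  · exact absurd heq.symm (hlt t ht s hs h)
end
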